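/- arXiv:2209.05028 — 2 statements merged into one kernel-verified Lean document; each statement's English description precedes it below -/
import Mathlib

section
/- In the multinomial assignment setting, write p_n = n^{-2} and suppose m(n)·p_n = c·n^{-a}·(1+o(1)) for some constants c > 0 and a ∈ (0,1) with a ∉ {1/k : k ∈ ℕ}. Then there is a unique positive integer k with 1/(k+1) < a < 1/k, and E[max_{σ ∈ S_n} Σ_{i=1}^n X_{iσ(i)}] = k·n·(1+o(1)); that is, E[max_σ Σ_i X_{iσ(i)}]/(k·n) → 1 as n → ∞. -/
open MeasureTheory Filter Real

noncomputable section

/-- The uniform measure on the `n × n` grid of cells. -/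
def cellMeasure (n : ℕ) : Measure (Fin n × Fin n) :=
  ((n : ENNReal) ^ 2)⁻¹ • Measure.count

/-- The law of `m` i.i.d. points, each uniformly distributed on the `n × n` grid;
under this measure the matrix of cell counts is multinomial `M(m, n²)`. -/
def gridMeasure (m n : ℕ) : Measure (Fin m → Fin n × Fin n) :=
  Measure.pi fun _ => cellMeasure n

/-- `X_{ij}`: the number of the `m` points falling in cell `(i, j)`. -/
def cellCount {m n : ℕ} (i j : Fin n) (ω : Fin m → Fin n × Fin n) : ℕ :=
  (Finset.univ.filter fun k => ω k = (i, j)).card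

/-- The assignment sum `S(σ) = ∑ i, X_{i σ(i)}`. -/
def assignSum {m n : ℕ} (σ : Equiv.Perm (Fin n)) (ω : Fin m → Fin n × Fin n) : ℝ :=
  ∑ i, (cellCount i (σ i) ω : ℝ)

/-- `max_{σ ∈ S_n} S(σ)`. -/
def maxAssign {m n : ℕ} (ω : Fin m → Fin n × Fin n) : ℝ :=
  ⨆ σ : Equiv.Perm (Fin n), assignSum σ ω

/-- `min_{σ ∈ S_n} S(σ)`. -/
def minAssign {m n : ℕ} (ω : Fin m → Fin n × Fin n) : ℝ :=
  ⨅ σ : Equiv.Perm (Fin n), assignSum σ ω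

/-- `E[max_{σ ∈ S_n} S(σ)]`. -/
def EmaxAssign (m n : ℕ) : ℝ :=
  ∫ ω, maxAssign ω ∂(gridMeasure m n)

/-- `E[min_{σ ∈ S_n} S(σ)]`. -/
def EminAssign (m n : ℕ) : ℝ :=
  ∫ ω, minAssign ω ∂(gridMeasure m n)

/-!
For a nonnegative integer `x` one has `x ≤ k + C(x, k + 1)`, so the maximum is at most `k n` plus
the number of `(k + 1)`-sets of points sharing a cell, whose mean is at most `n² (m / n²)^(k + 1)
= o(n)`.

For the lower bound, consider the matrix with entries `C(X_{ij}, k)`, which is supported on the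
cells with at least `k` points. Each line sum has mean `d → ∞`. Since the cells compete for the
same points, the entries are negatively correlated, so the variance of a line sum is `O(d)` and
all but a negligible part of the mass lies on lines whose sum is close to `d`. Dividing each entry
by the largest of `d` and its two line sums therefore gives a doubly substochastic matrix of total
mass `n (1 - o(1))`. Completing it to a doubly stochastic matrix and applying Birkhoff's theorem
produces a permutation of weight at least `k n (1 - o(1))`.
-/

open ProbabilityTheory Asymptotics
open scoped Topology

section Substochastic

variable {R ι κ : Type*} [Fintype ι] [Fintype κ]

/-- A doubly substochastic (possibly rectangular) matrix: the fractional matchings between rows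
and columns. -/
structure IsDoublySubstochastic [Semiring R] [PartialOrder R] (w : Matrix ι κ R) : Prop where
  nonneg : ∀ i j, 0 ≤ w i j
  row_sum_le_one : ∀ i, ∑ j, w i j ≤ 1
  col_sum_le_one : ∀ j, ∑ i, w i j ≤ 1

variable [Field R] [LinearOrder R]

/-- The matrix `Y` scaled entrywise into a fractional matching: an entry is divided by its row sum,
its column sum or `d`, whichever is largest. If all line sums of `Y` are close to `d`, this is
close to `Y / d`. -/
def cappedWeight (Y : Matrix ι κ R) (d : R) : Matrix ι κ R :=
  fun i j => Y i j / max d (max (∑ j', Y i j') (∑ i', Y i' j))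

lemma cappedWeight_transpose (Y : Matrix ι κ R) (d : R) :
    cappedWeight Y.transpose d = (cappedWeight Y d).transpose := by
  ext i j
  simp [cappedWeight, max_comm (∑ j', Y j' i)]

variable [IsStrictOrderedRing R]

lemma exists_perm_sum_mul_le_of_mem_doublyStochastic [DecidableEq ι] {v : Matrix ι ι R}
    (hv : v ∈ doublyStochastic R ι) (X : Matrix ι ι R) :
    ∃ σ : Equiv.Perm ι, ∑ i, ∑ j, v i j * X i j ≤ ∑ i, X i (σ i) := by
  let f : Matrix ι ι R →ₗ[R] R := ∑ i, ∑ j, X i j • Matrix.entryLinearMap R R i j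
  have hf (u : Matrix ι ι R) : f u = ∑ i, ∑ j, u i j * X i j := by
    simp [f, mul_comm]
  rw [← SetLike.mem_coe, doublyStochastic_eq_convexHull_permMatrix] at hv
  obtain ⟨_, ⟨σ, rfl⟩, hσ⟩ :=
    (f.convexOn convex_univ).exists_ge_of_mem_convexHull (Set.subset_univ _) hv
  refine ⟨σ, ?_⟩
  simpa [hf, PEquiv.toMatrix_apply, Equiv.toPEquiv_apply] using hσ

-- Add the rank-one matrix (row deficit) × (column deficit) / (total deficit).
lemma IsDoublySubstochastic.exists_mem_doublyStochastic_ge [DecidableEq ι] {w : Matrix ι ι R}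
    (hw : IsDoublySubstochastic w) : ∃ v ∈ doublyStochastic R ι, ∀ i j, w i j ≤ v i j := by
  let r (i : ι) : R := 1 - ∑ j, w i j
  let c (j : ι) : R := 1 - ∑ i, w i j
  have hr (i : ι) : 0 ≤ r i := sub_nonneg.2 (hw.row_sum_le_one i)
  have hc (j : ι) : 0 ≤ c j := sub_nonneg.2 (hw.col_sum_le_one j)
  have hrc : ∑ i, r i = ∑ j, c j := by
    simp only [r, c, Finset.sum_sub_distrib]
    rw [Finset.sum_comm]
  have row_cancel (i : ι) : r i * (∑ j, c j) / ∑ j, c j = r i :=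
    mul_div_cancel_of_imp fun h =>
      (Finset.sum_eq_zero_iff_of_nonneg fun i _ => hr i).1 (hrc.trans h) i (Finset.mem_univ i)
  have col_cancel (j : ι) : (∑ i, r i) * c j / ∑ i, c i = c j := by
    rw [hrc, mul_comm]
    exact mul_div_cancel_of_imp fun h =>
      (Finset.sum_eq_zero_iff_of_nonneg fun j _ => hc j).1 h j (Finset.mem_univ j)
  have hcorr (i j : ι) : 0 ≤ r i * c j / ∑ l, c l :=
    div_nonneg (mul_nonneg (hr i) (hc j)) (Finset.sum_nonneg fun l _ => hc l)
  refine ⟨fun i j => w i j + r i * c j / ∑ l, c l, mem_doublyStochastic_iff_sum.2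
    ⟨fun i j => add_nonneg (hw.nonneg i j) (hcorr i j), fun i => ?_, fun j => ?_⟩,
    fun i j => le_add_of_nonneg_right (hcorr i j)⟩
  · rw [Finset.sum_add_distrib, ← Finset.sum_div, ← Finset.mul_sum, row_cancel]
    exact add_sub_cancel _ _
  · rw [Finset.sum_add_distrib, ← Finset.sum_div, ← Finset.sum_mul, col_cancel]
    exact add_sub_cancel _ _

lemma IsDoublySubstochastic.exists_perm_sum_mul_le {w X : Matrix ι ι R}
    (hw : IsDoublySubstochastic w) (hX : ∀ i j, 0 ≤ X i j) :
    ∃ σ : Equiv.Perm ι, ∑ i, ∑ j, w i j * X i j ≤ ∑ i, X i (σ i) := by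
  classical
  obtain ⟨v, hv, hwv⟩ := hw.exists_mem_doublyStochastic_ge
  obtain ⟨σ, hσ⟩ := exists_perm_sum_mul_le_of_mem_doublyStochastic hv X
  refine ⟨σ, le_trans ?_ hσ⟩
  gcongr with i _ j _
  · exact hX i j
  · exact hwv i j

variable {Y : Matrix ι κ R} {d : R}

lemma row_sum_cappedWeight_le_one (hY : ∀ i j, 0 ≤ Y i j) (hd : 0 < d) (i : ι) :
    ∑ j, cappedWeight Y d i j ≤ 1 := by
  have hmax : 0 < max d (∑ j, Y i j) := hd.trans_le (le_max_left _ _)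
  calc ∑ j, cappedWeight Y d i j
      ≤ ∑ j, Y i j / max d (∑ j', Y i j') := Finset.sum_le_sum fun j _ =>
        div_le_div_of_nonneg_left (hY i j) hmax (max_le_max_left d (le_max_left _ _))
    _ = (∑ j, Y i j) / max d (∑ j, Y i j) := (Finset.sum_div _ _ _).symm
    _ ≤ 1 := div_le_one_of_le₀ (le_max_right _ _) hmax.le

lemma isDoublySubstochastic_cappedWeight (hY : ∀ i j, 0 ≤ Y i j) (hd : 0 < d) :
    IsDoublySubstochastic (cappedWeight Y d) where
  nonneg i j := div_nonneg (hY i j) (hd.le.trans (le_max_left _ _))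
  row_sum_le_one := row_sum_cappedWeight_le_one hY hd
  col_sum_le_one j := by
    simpa [cappedWeight_transpose] using
      row_sum_cappedWeight_le_one (Y := Y.transpose) (fun i j => hY j i) hd j

lemma inv_max_add_inv_max_sub_inv_le (hd : 0 < d) (r c : R) :
    (max d r)⁻¹ + (max d c)⁻¹ - d⁻¹ ≤ (max d (max r c))⁻¹ := by
  have hinv (x : R) : (max d x)⁻¹ ≤ d⁻¹ := inv_anti₀ hd (le_max_left d x)
  rcases le_total r c with h | h
  · rw [max_eq_right h]
    linarith [hinv r]
  · rw [max_eq_left h]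
    linarith [hinv c]

lemma div_sub_abs_sub_div_le_mul_inv_max (hd : 0 < d) (r : R) :
    r / d - |r - d| / d ≤ r * (max d r)⁻¹ := by
  rcases le_total r d with h | h
  · rw [max_eq_left h, ← div_eq_mul_inv]
    exact sub_le_self _ (by positivity)
  · rw [max_eq_right h, mul_inv_cancel₀ (hd.trans_le h).ne', abs_of_nonneg (sub_nonneg.2 h),
      ← sub_div, sub_sub_cancel, div_self hd.ne']

lemma le_sum_cappedWeight (hY : ∀ i j, 0 ≤ Y i j) (hd : 0 < d) :
    (∑ i, ∑ j, Y i j - ∑ i, |∑ j, Y i j - d| - ∑ j, |∑ i, Y i j - d|) / d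
      ≤ ∑ i, ∑ j, cappedWeight Y d i j := by
  let r (i : ι) : R := ∑ j, Y i j
  let c (j : κ) : R := ∑ i, Y i j
  have htotal : ∑ i, r i = ∑ j, c j := Finset.sum_comm
  have hrow : ∑ i, (r i / d - |r i - d| / d) ≤ ∑ i, r i * (max d (r i))⁻¹ :=
    Finset.sum_le_sum fun i _ => div_sub_abs_sub_div_le_mul_inv_max hd (r i)
  have hcol : ∑ j, (c j / d - |c j - d| / d) ≤ ∑ j, c j * (max d (c j))⁻¹ :=
    Finset.sum_le_sum fun j _ => div_sub_abs_sub_div_le_mul_inv_max hd (c j)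
  simp only [Finset.sum_sub_distrib, ← Finset.sum_div, ← htotal] at hrow hcol
  calc (∑ i, r i - ∑ i, |r i - d| - ∑ j, |c j - d|) / d
      = ((∑ i, r i) / d - (∑ i, |r i - d|) / d) + ((∑ i, r i) / d - (∑ j, |c j - d|) / d)
          - (∑ i, r i) / d := by ring
    _ ≤ ∑ i, r i * (max d (r i))⁻¹ + ∑ j, c j * (max d (c j))⁻¹ - (∑ i, r i) * d⁻¹ := by
        rw [← div_eq_mul_inv]
        gcongr
    _ = ∑ i, ∑ j, Y i j * ((max d (r i))⁻¹ + (max d (c j))⁻¹ - d⁻¹) := by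
        simp only [mul_sub, mul_add, Finset.sum_add_distrib, Finset.sum_sub_distrib,
          ← Finset.sum_mul, r]
        rw [Finset.sum_comm (f := fun i j => Y i j * (max d (c j))⁻¹)]
        simp only [← Finset.sum_mul, c]
    _ ≤ ∑ i, ∑ j, cappedWeight Y d i j := by
        simp only [cappedWeight, div_eq_mul_inv]
        gcongr with i _ j _
        · exact hY i j
        · exact inv_max_add_inv_max_sub_inv_le hd _ _

lemma exists_perm_le_sum_of_support_le {X Y : Matrix ι ι R} {k d : R} (hX : ∀ i j, 0 ≤ X i j)
    (hY : ∀ i j, 0 ≤ Y i j) (hk : 0 ≤ k) (hXY : ∀ i j, Y i j ≠ 0 → k ≤ X i j) (hd : 0 < d) :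
    ∃ σ : Equiv.Perm ι,
      k * ((∑ i, ∑ j, Y i j - ∑ i, |∑ j, Y i j - d| - ∑ j, |∑ i, Y i j - d|) / d)
        ≤ ∑ i, X i (σ i) := by
  have hw := isDoublySubstochastic_cappedWeight hY hd
  obtain ⟨σ, hσ⟩ := hw.exists_perm_sum_mul_le hX
  refine ⟨σ, (mul_le_mul_of_nonneg_left (le_sum_cappedWeight hY hd) hk).trans (le_trans ?_ hσ)⟩
  simp only [mul_comm k, Finset.sum_mul]
  refine Finset.sum_le_sum fun i _ => Finset.sum_le_sum fun j _ => ?_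
  by_cases hij : Y i j = 0
  · simp [cappedWeight, hij]
  · exact mul_le_mul_of_nonneg_left (hXY i j hij) (hw.nonneg i j)

end Substochastic

section Choose

lemma choose_sq_eq_sum (x k : ℕ) : x.choose k ^ 2 =
    ∑ s ∈ Finset.range (k + 1), k.choose s * (x.choose (k + s) * (k + s).choose k) := by
  rcases lt_or_ge x k with hxk | hkx
  · simp [Nat.choose_eq_zero_of_lt hxk, Nat.choose_eq_zero_of_lt (hxk.trans_le (k.le_add_right _))]
  have vandermonde : x.choose k = ∑ s ∈ Finset.range (k + 1), (x - k).choose s * k.choose s := by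
    conv_lhs => rw [← Nat.sub_add_cancel hkx, Nat.add_choose_eq,
      Finset.Nat.sum_antidiagonal_eq_sum_range_succ_mk]
    refine Finset.sum_congr rfl fun s hs => ?_
    rw [Nat.choose_symm (Finset.mem_range_succ_iff.1 hs)]
  calc x.choose k ^ 2
      = ∑ s ∈ Finset.range (k + 1), x.choose k * ((x - k).choose s * k.choose s) := by
        rw [← Finset.mul_sum, ← vandermonde, sq]
    _ = _ := Finset.sum_congr rfl fun s _ => by
        rw [Nat.choose_mul (Nat.le_add_right k s), Nat.add_sub_cancel_left]
        ring

lemma choose_mul_choose_add_le (m k s : ℕ) :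
    m.choose (k + s) * (k + s).choose k ≤ m.choose k * m ^ s := by
  rw [Nat.choose_mul (Nat.le_add_right k s), Nat.add_sub_cancel_left]
  gcongr
  exact (Nat.choose_le_pow _ _).trans (Nat.pow_le_pow_left (Nat.sub_le m k) s)

lemma le_add_choose_succ (x k : ℕ) : x ≤ k + x.choose (k + 1) := by
  induction x with
  | zero => exact Nat.zero_le _
  | succ x ih =>
    rw [Nat.choose_succ_succ']
    rcases lt_or_ge x k with hxk | hkx
    · exact hxk.trans_le (Nat.le_add_right _ _)
    · have := Nat.choose_pos hkx
      lia

end Choose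

section Variance

variable {Ω κ : Type*} [MeasurableSpace Ω] {μ : Measure Ω}

lemma variance_sum_le_sum_variance_of_covariance_nonpos [IsFiniteMeasure μ] {s : Finset κ}
    {X : κ → Ω → ℝ} (hX : ∀ i ∈ s, MemLp (X i) 2 μ)
    (hcov : (s : Set κ).Pairwise fun i j => cov[X i, X j; μ] ≤ 0) :
    Var[∑ i ∈ s, X i; μ] ≤ ∑ i ∈ s, Var[X i; μ] := by
  classical
  rw [variance_sum' hX]
  refine Finset.sum_le_sum fun i hi => ?_
  rw [← Finset.add_sum_erase s _ hi, covariance_self (hX i hi).aemeasurable]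
  refine add_le_of_nonpos_right (Finset.sum_nonpos fun j hj => ?_)
  exact hcov hi (Finset.mem_of_mem_erase hj) (Finset.ne_of_mem_erase hj).symm

lemma integral_abs_sub_integral_le_sqrt_variance [IsProbabilityMeasure μ] {X : Ω → ℝ}
    (hX : MemLp X 2 μ) : ∫ ω, |X ω - μ[X]| ∂μ ≤ √(Var[X; μ]) := by
  have hdev : MemLp (fun ω => |X ω - μ[X]|) 2 μ := (hX.sub (memLp_const _)).abs
  have hsq : μ[(fun ω => |X ω - μ[X]|) ^ 2] = Var[X; μ] := by
    simp only [variance_eq_integral hX.aemeasurable, Pi.pow_apply, sq_abs]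
  refine Real.le_sqrt_of_sq_le ?_
  rw [← hsq, ← sub_nonneg, ← variance_eq_sub hdev]
  exact variance_nonneg _ μ

end Variance

section HitCount

variable {α ι : Type*}

/-- The number of points of the configuration `ω` that lie in `A` (`0` if there are infinitely
many). -/
def hitCount (A : Set α) (ω : ι → α) : ℕ := {t | ω t ∈ A}.ncard

lemma choose_hitCount [Fintype ι] (A : Set α) (k : ℕ) (ω : ι → α) :
    ((hitCount A ω).choose k : ℝ) = ∑ T ∈ Finset.powersetCard k (Finset.univ : Finset ι),
      ((T : Set ι).pi fun _ => A).indicator 1 ω := by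
  classical
  simp only [Set.indicator_apply, Pi.one_apply, Finset.sum_boole, hitCount,
    Set.ncard_eq_toFinset_card', ← Finset.card_powersetCard]
  congr 2
  ext T
  simp [Finset.mem_powersetCard, Finset.subset_iff, Set.mem_pi, and_comm]

variable [MeasurableSpace α] {A B : Set α}

lemma measurableSet_finset_pi_const (T : Finset ι) (hA : MeasurableSet A) :
    MeasurableSet ((T : Set ι).pi fun _ => A) :=
  .pi T.countable_toSet fun _ _ => hA

variable [Fintype ι] {P : Measure α} [IsProbabilityMeasure P]

lemma measureReal_pi_finset_pi_const (T : Finset ι) (A : Set α) :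
    (Measure.pi fun _ : ι => P).real ((T : Set ι).pi fun _ => A) = P.real A ^ T.card := by
  simp [measureReal_def, Measure.pi_pi_finset]

lemma memLp_choose_hitCount (hA : MeasurableSet A) (k : ℕ) (p : ENNReal) :
    MemLp (fun ω => ((hitCount A ω).choose k : ℝ)) p (Measure.pi fun _ : ι => P) := by
  simp only [choose_hitCount]
  exact memLp_finsetSum _ fun T _ => (memLp_const 1).indicator (measurableSet_finset_pi_const T hA)

lemma integral_choose_hitCount (hA : MeasurableSet A) (k : ℕ) :
    ∫ ω, ((hitCount A ω).choose k : ℝ) ∂(Measure.pi fun _ : ι => P)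
      = (Fintype.card ι).choose k * P.real A ^ k := by
  simp only [choose_hitCount]
  rw [integral_finsetSum _ fun T _ =>
    (integrable_const _).indicator (measurableSet_finset_pi_const T hA)]
  calc ∑ T ∈ Finset.powersetCard k (Finset.univ : Finset ι), ∫ ω : ι → α,
          ((T : Set ι).pi fun _ => A).indicator (1 : (ι → α) → ℝ) ω ∂(Measure.pi fun _ => P)
      = ∑ _ ∈ Finset.powersetCard k (Finset.univ : Finset ι), P.real A ^ k := by
        refine Finset.sum_congr rfl fun T hT => ?_
        rw [integral_indicator_one (measurableSet_finset_pi_const T hA),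
          measureReal_pi_finset_pi_const, (Finset.mem_powersetCard.1 hT).2]
    _ = (Fintype.card ι).choose k * P.real A ^ k := by
        simp

-- Index sets that meet give the empty event; disjoint ones give independent events.
lemma measureReal_finset_pi_inter_le (hAB : Disjoint A B) (T U : Finset ι) :
    (Measure.pi fun _ : ι => P).real (((T : Set ι).pi fun _ => A) ∩ (U : Set ι).pi fun _ => B)
      ≤ P.real A ^ T.card * P.real B ^ U.card := by
  classical
  by_cases hTU : Disjoint T U
  · have hrect : (((T : Set ι).pi fun _ => A) ∩ (U : Set ι).pi fun _ => B)
        = ((T ∪ U : Finset ι) : Set ι).pi fun t => if t ∈ T then A else B := by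
      rw [Finset.coe_union, Set.union_pi]
      congr 1
      · exact Set.pi_congr rfl fun t ht => (if_pos ht).symm
      · exact Set.pi_congr rfl fun t ht => (if_neg (Finset.disjoint_right.1 hTU ht)).symm
    rw [hrect, measureReal_def, Measure.pi_pi_finset, ENNReal.toReal_prod,
      Finset.prod_union hTU]
    refine le_of_eq (congrArg₂ _ ?_ ?_)
    · exact Finset.prod_eq_pow_card fun t ht => by rw [if_pos ht, measureReal_def]
    · exact Finset.prod_eq_pow_card fun t ht => by
        rw [if_neg (Finset.disjoint_right.1 hTU ht), measureReal_def]
  · obtain ⟨t, hT, hU⟩ := Finset.not_disjoint_iff.1 hTU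
    have hempty : (((T : Set ι).pi fun _ => A) ∩ (U : Set ι).pi fun _ => B) = ∅ :=
      Set.eq_empty_of_forall_notMem fun ω hω => Set.disjoint_left.1 hAB (hω.1 t hT) (hω.2 t hU)
    rw [hempty, measureReal_empty]
    positivity

lemma integral_choose_hitCount_mul_le (hA : MeasurableSet A) (hB : MeasurableSet B)
    (hAB : Disjoint A B) (k l : ℕ) :
    ∫ ω, ((hitCount A ω).choose k : ℝ) * (hitCount B ω).choose l ∂(Measure.pi fun _ : ι => P)
      ≤ (Fintype.card ι).choose k * P.real A ^ k
        * ((Fintype.card ι).choose l * P.real B ^ l) := by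
  have hmeas (T U : Finset ι) :
      MeasurableSet (((T : Set ι).pi fun _ => A) ∩ (U : Set ι).pi fun _ => B) :=
    (measurableSet_finset_pi_const T hA).inter (measurableSet_finset_pi_const U hB)
  have hprod (ω : ι → α) : ((hitCount A ω).choose k : ℝ) * (hitCount B ω).choose l
      = ∑ T ∈ Finset.powersetCard k (Finset.univ : Finset ι),
        ∑ U ∈ Finset.powersetCard l (Finset.univ : Finset ι),
          (((T : Set ι).pi fun _ => A) ∩ (U : Set ι).pi fun _ => B).indicator 1 ω := by
    simp only [choose_hitCount, Finset.sum_mul_sum, Set.inter_indicator_one, Pi.mul_apply]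
  simp only [hprod]
  rw [integral_finsetSum _ fun _ _ => integrable_finsetSum _ fun _ _ =>
    (integrable_const _).indicator (hmeas _ _)]
  calc ∑ T ∈ Finset.powersetCard k (Finset.univ : Finset ι), ∫ ω : ι → α,
          ∑ U ∈ Finset.powersetCard l (Finset.univ : Finset ι),
            (((T : Set ι).pi fun _ => A) ∩ (U : Set ι).pi fun _ => B).indicator
              (1 : (ι → α) → ℝ) ω ∂(Measure.pi fun _ => P)
      ≤ ∑ _ ∈ Finset.powersetCard k (Finset.univ : Finset ι),
          ∑ _ ∈ Finset.powersetCard l (Finset.univ : Finset ι), P.real A ^ k * P.real B ^ l := by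
        refine Finset.sum_le_sum fun T hT => ?_
        rw [integral_finsetSum _ fun U _ => (integrable_const _).indicator (hmeas T U)]
        refine Finset.sum_le_sum fun U hU => ?_
        rw [integral_indicator_one (hmeas T U),
          ← (Finset.mem_powersetCard.1 hT).2, ← (Finset.mem_powersetCard.1 hU).2]
        exact measureReal_finset_pi_inter_le hAB T U
    _ = _ := by
        simp only [Finset.sum_const, Finset.card_powersetCard, Finset.card_univ, nsmul_eq_mul]
        ring

lemma covariance_choose_hitCount_nonpos (hA : MeasurableSet A) (hB : MeasurableSet B)
    (hAB : Disjoint A B) (k l : ℕ) :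
    cov[fun ω => ((hitCount A ω).choose k : ℝ), fun ω => ((hitCount B ω).choose l : ℝ);
      Measure.pi fun _ : ι => P] ≤ 0 := by
  rw [covariance_eq_sub (memLp_choose_hitCount hA k 2) (memLp_choose_hitCount hB l 2),
    integral_choose_hitCount hA, integral_choose_hitCount hB, sub_nonpos]
  exact integral_choose_hitCount_mul_le hA hB hAB k l

lemma integral_choose_hitCount_sq_le (hA : MeasurableSet A) (k : ℕ) :
    ∫ ω, ((hitCount A ω).choose k : ℝ) ^ 2 ∂(Measure.pi fun _ : ι => P)
      ≤ (Fintype.card ι).choose k * P.real A ^ k * (1 + Fintype.card ι * P.real A) ^ k := by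
  let m := Fintype.card ι
  have expand (ω : ι → α) : ((hitCount A ω).choose k : ℝ) ^ 2 = ∑ s ∈ Finset.range (k + 1),
      (k.choose s * (k + s).choose k : ℝ) * (hitCount A ω).choose (k + s) := by
    rw [← Nat.cast_pow, choose_sq_eq_sum]
    push_cast
    exact Finset.sum_congr rfl fun s _ => by ring
  simp only [expand]
  rw [integral_finsetSum _ fun s _ =>
    ((memLp_choose_hitCount hA (k + s) 1).integrable le_rfl).const_mul _]
  simp only [integral_const_mul, integral_choose_hitCount hA]
  calc ∑ s ∈ Finset.range (k + 1),
        (k.choose s * (k + s).choose k : ℝ) * (m.choose (k + s) * P.real A ^ (k + s))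
      = ∑ s ∈ Finset.range (k + 1),
        k.choose s * ((m.choose (k + s) * (k + s).choose k : ℕ) : ℝ) * P.real A ^ (k + s) := by
        push_cast
        exact Finset.sum_congr rfl fun s _ => by ring
    _ ≤ ∑ s ∈ Finset.range (k + 1),
        k.choose s * ((m.choose k * m ^ s : ℕ) : ℝ) * P.real A ^ (k + s) := by
        gcongr ∑ s ∈ _, _ * ?_ * _
        exact_mod_cast choose_mul_choose_add_le m k _
    _ = m.choose k * P.real A ^ k * (1 + m * P.real A) ^ k := by
        rw [add_comm 1, add_pow, Finset.mul_sum]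
        push_cast
        exact Finset.sum_congr rfl fun s _ => by ring

lemma variance_sum_choose_hitCount_le {κ : Type*} {s : Finset κ} {A : κ → Set α}
    (hA : ∀ l ∈ s, MeasurableSet (A l)) (hdisj : (s : Set κ).PairwiseDisjoint A) (k : ℕ) :
    Var[∑ l ∈ s, fun ω => ((hitCount (A l) ω).choose k : ℝ); Measure.pi fun _ : ι => P]
      ≤ ∑ l ∈ s, (Fintype.card ι).choose k * P.real (A l) ^ k
          * (1 + Fintype.card ι * P.real (A l)) ^ k := by
  have hmem (l) (hl : l ∈ s) := memLp_choose_hitCount (ι := ι) (P := P) (hA l hl) k 2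
  refine (variance_sum_le_sum_variance_of_covariance_nonpos hmem fun i hi j hj hij =>
    covariance_choose_hitCount_nonpos (hA i hi) (hA j hj) (hdisj hi hj hij) k k).trans ?_
  exact Finset.sum_le_sum fun l hl => (variance_le_expectation_sq (hmem l hl).1).trans
    (integral_choose_hitCount_sq_le (hA l hl) k)

end HitCount

section Grid

variable {m n : ℕ}

instance isProbabilityMeasure_cellMeasure [NeZero n] : IsProbabilityMeasure (cellMeasure n) := by
  refine ⟨?_⟩
  have hn : ((n * n : ℕ) : ENNReal) ≠ 0 := mod_cast mul_ne_zero (NeZero.ne n) (NeZero.ne n)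
  rw [cellMeasure, Measure.smul_apply, Measure.count_univ, ENat.card_eq_coe_fintype_card,
    Fintype.card_prod, Fintype.card_fin, smul_eq_mul, sq]
  exact mod_cast ENNReal.inv_mul_cancel hn (by finiteness)

instance isProbabilityMeasure_gridMeasure [NeZero n] : IsProbabilityMeasure (gridMeasure m n) :=
  inferInstanceAs (IsProbabilityMeasure (Measure.pi _))

lemma cellMeasure_real_singleton (c : Fin n × Fin n) : (cellMeasure n).real {c} = 1 / n ^ 2 := by
  simp [cellMeasure, measureReal_def]

lemma cellCount_eq_hitCount (i j : Fin n) (ω : Fin m → Fin n × Fin n) :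
    cellCount i j ω = hitCount {(i, j)} ω := by
  simp [cellCount, hitCount, Set.ncard_eq_toFinset_card']

/-- The expected number of `k`-element sets of points that share a cell of a fixed row (or of a
fixed column) of the grid. -/
def lineMean (m n k : ℕ) : ℝ := n * (m.choose k * (1 / (n : ℝ) ^ 2) ^ k)

/-- The number of `k`-element sets of points that share a cell of the line `f`; the lines of
interest are the rows `fun j => (i, j)` and the columns `fun i => (i, j)`. -/
def lineCount (k : ℕ) (f : Fin n → Fin n × Fin n) (ω : Fin m → Fin n × Fin n) : ℝ :=
  ∑ l, ((cellCount (f l).1 (f l).2 ω).choose k : ℝ)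

lemma lineCount_eq_sum_hitCount (k : ℕ) (f : Fin n → Fin n × Fin n) :
    lineCount (m := m) k f = ∑ l, fun ω => ((hitCount {f l} ω).choose k : ℝ) := by
  ext ω
  simp [lineCount, cellCount_eq_hitCount]

lemma assignSum_le_maxAssign (σ : Equiv.Perm (Fin n)) (ω : Fin m → Fin n × Fin n) :
    assignSum σ ω ≤ maxAssign ω :=
  le_ciSup (f := fun σ => assignSum σ ω) (Set.finite_range _).bddAbove σ

lemma mul_div_le_maxAssign {k : ℕ} {d : ℝ} (hd : 0 < d) (ω : Fin m → Fin n × Fin n) :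
    k * ((∑ i, lineCount k (fun j => (i, j)) ω - ∑ i, |lineCount k (fun j => (i, j)) ω - d|
      - ∑ j, |lineCount k (fun i => (i, j)) ω - d|) / d) ≤ maxAssign ω := by
  obtain ⟨σ, hσ⟩ := exists_perm_le_sum_of_support_le (X := fun i j => (cellCount i j ω : ℝ))
    (Y := fun i j => ((cellCount i j ω).choose k : ℝ)) (k := (k : ℝ)) (fun _ _ => by positivity)
    (fun _ _ => by positivity) (by positivity)
    (fun i j hij => mod_cast not_lt.1 fun hlt => hij (mod_cast Nat.choose_eq_zero_of_lt hlt)) hd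
  exact hσ.trans (assignSum_le_maxAssign σ ω)

lemma maxAssign_le (k : ℕ) (ω : Fin m → Fin n × Fin n) :
    maxAssign ω ≤ k * n + ∑ i, lineCount (k + 1) (fun j => (i, j)) ω := by
  refine ciSup_le fun σ => ?_
  have hcell (i : Fin n) :
      (cellCount i (σ i) ω : ℝ) ≤ k + lineCount (k + 1) (fun j => (i, j)) ω := by
    refine le_trans (mod_cast le_add_choose_succ (cellCount i (σ i) ω) k)
      (add_le_add_right (?_ : ((cellCount i (σ i) ω).choose (k + 1) : ℝ) ≤ _) (k : ℝ))
    exact Finset.single_le_sum (f := fun j => ((cellCount i j ω).choose (k + 1) : ℝ))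
      (fun _ _ => by positivity) (Finset.mem_univ (σ i))
  refine (Finset.sum_le_sum fun i _ => hcell i).trans_eq ?_
  rw [Finset.sum_add_distrib, Finset.sum_const, Finset.card_univ, Fintype.card_fin, nsmul_eq_mul,
    mul_comm (k : ℝ)]

variable [NeZero n]

lemma integral_lineCount (k : ℕ) (f : Fin n → Fin n × Fin n) :
    ∫ ω, lineCount k f ω ∂(gridMeasure m n) = lineMean m n k := by
  simp only [lineCount, cellCount_eq_hitCount]
  rw [integral_finsetSum _ fun _ _ => .of_finite]
  simp only [gridMeasure, integral_choose_hitCount (measurableSet_singleton _),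
    cellMeasure_real_singleton, Finset.sum_const, Finset.card_univ, Fintype.card_fin, nsmul_eq_mul,
    lineMean]

lemma variance_lineCount_le (k : ℕ) {f : Fin n → Fin n × Fin n} (hf : f.Injective) :
    Var[lineCount k f; gridMeasure m n] ≤ lineMean m n k * (1 + m / n ^ 2) ^ k := by
  have hdisj : ((Finset.univ : Finset (Fin n)) : Set (Fin n)).PairwiseDisjoint
      fun l => ({f l} : Set (Fin n × Fin n)) := fun l _ l' _ hl =>
    Set.disjoint_singleton.2 (hf.ne hl)
  rw [lineCount_eq_sum_hitCount, gridMeasure]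
  refine (variance_sum_choose_hitCount_le (fun _ _ => measurableSet_singleton _)
    hdisj k).trans_eq ?_
  simp only [cellMeasure_real_singleton, Finset.sum_const, Finset.card_univ, Fintype.card_fin,
    nsmul_eq_mul, lineMean]
  ring

lemma integral_abs_lineCount_sub_lineMean_le (k : ℕ) {f : Fin n → Fin n × Fin n}
    (hf : f.Injective) : ∫ ω, |lineCount k f ω - lineMean m n k| ∂(gridMeasure m n)
      ≤ √(lineMean m n k * (1 + m / n ^ 2) ^ k) := by
  have hdev := integral_abs_sub_integral_le_sqrt_variance
    (MemLp.of_discrete (μ := gridMeasure m n) (f := lineCount k f) (p := 2))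
  rw [integral_lineCount] at hdev
  exact hdev.trans (Real.sqrt_le_sqrt (variance_lineCount_le k hf))

lemma le_EmaxAssign {k : ℕ} (hd : 0 < lineMean m n k) :
    k * (n * (1 - 2 * √((1 + m / n ^ 2) ^ k / lineMean m n k))) ≤ EmaxAssign m n := by
  set d := lineMean m n k
  set v : ℝ := (1 + m / n ^ 2) ^ k
  have hlines (F : Fin n → Fin n → Fin n × Fin n) (hF : ∀ i, (F i).Injective) :
      ∑ i, ∫ ω, |lineCount k (F i) ω - d| ∂(gridMeasure m n) ≤ n * √(d * v) := by
    refine (Finset.sum_le_card_nsmul _ _ _ fun i _ =>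
      integral_abs_lineCount_sub_lineMean_le k (hF i)).trans_eq ?_
    rw [Finset.card_univ, Fintype.card_fin, nsmul_eq_mul]
  have hrows := hlines (fun i j => (i, j)) fun i => Prod.mk_right_injective i
  have hcols := hlines (fun j i => (i, j)) fun j => Prod.mk_left_injective j
  calc k * (n * (1 - 2 * √(v / d)))
      = k * ((n * d - n * √(d * v) - n * √(d * v)) / d) := by
        have hsqrt : √(d * v) = d * √(v / d) := by
          rw [← Real.sqrt_sq hd.le, ← Real.sqrt_mul (sq_nonneg d), Real.sqrt_sq hd.le]
          congr 1
          field_simp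
        rw [hsqrt]
        field_simp
        ring
    _ ≤ k * ((n * d - ∑ i, ∫ ω, |lineCount k (fun j => (i, j)) ω - d| ∂(gridMeasure m n)
          - ∑ j, ∫ ω, |lineCount k (fun i => (i, j)) ω - d| ∂(gridMeasure m n)) / d) := by
        gcongr
    _ = ∫ ω, k * ((∑ i, lineCount k (fun j => (i, j)) ω
          - ∑ i, |lineCount k (fun j => (i, j)) ω - d|
          - ∑ j, |lineCount k (fun i => (i, j)) ω - d|) / d) ∂(gridMeasure m n) := by
        rw [integral_const_mul, integral_div, integral_sub .of_finite .of_finite,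
          integral_sub .of_finite .of_finite]
        simp only [integral_finsetSum _ fun _ _ => Integrable.of_finite, integral_lineCount,
          Finset.sum_const, Finset.card_univ, Fintype.card_fin, nsmul_eq_mul, d]
    _ ≤ EmaxAssign m n :=
        integral_mono .of_finite .of_finite fun ω => mul_div_le_maxAssign hd ω

lemma EmaxAssign_le (m n k : ℕ) [NeZero n] :
    EmaxAssign m n ≤ k * n + n ^ 2 * ((m : ℝ) / n ^ 2) ^ (k + 1) := by
  calc EmaxAssign m n
      ≤ ∫ ω, k * n + ∑ i, lineCount (k + 1) (fun j => (i, j)) ω ∂(gridMeasure m n) :=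
        integral_mono .of_finite .of_finite (maxAssign_le k)
    _ = k * n + n * lineMean m n (k + 1) := by
        rw [integral_add .of_finite .of_finite, integral_finsetSum _ fun _ _ => .of_finite]
        simp only [integral_lineCount, integral_const, probReal_univ, one_smul, Finset.sum_const,
          Finset.card_univ, Fintype.card_fin, nsmul_eq_mul]
    _ ≤ k * n + n ^ 2 * ((m : ℝ) / n ^ 2) ^ (k + 1) := by
        have hchoose : (m.choose (k + 1) : ℝ) ≤ (m : ℝ) ^ (k + 1) :=
          mod_cast Nat.choose_le_pow m (k + 1)
        rw [lineMean, ← mul_assoc, ← sq, div_eq_mul_one_div (m : ℝ), mul_pow]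
        gcongr

end Grid

section Asymptotics

lemma natCast_mul_div_sq_pow_le_pow {m n k : ℕ} (hk : k ≠ 0) :
    (n : ℝ) * ((m : ℝ) / n ^ 2) ^ k ≤ (m : ℝ) ^ k := by
  rcases n.eq_zero_or_pos with rfl | hn
  · simp
  have hn1 : (1 : ℝ) ≤ n := mod_cast hn
  rw [div_pow, mul_div_assoc', div_le_iff₀ (by positivity), mul_comm, ← pow_mul]
  gcongr
  exact le_self_pow₀ hn1 (mul_ne_zero two_ne_zero hk)

lemma tendsto_lineMean_atTop {m : ℕ → ℕ} {k : ℕ} (hk : k ≠ 0)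
    (hlow : Tendsto (fun n : ℕ => (n : ℝ) * ((m n : ℝ) / n ^ 2) ^ k) atTop atTop) :
    Tendsto (fun n => lineMean (m n) n k) atTop atTop := by
  have hm : Tendsto m atTop atTop := tendsto_atTop.2 fun M => by
    filter_upwards [hlow.eventually_ge_atTop ((M : ℝ) ^ k)] with n hn
    exact (Nat.pow_le_pow_iff_left hk).1 (mod_cast hn.trans (natCast_mul_div_sq_pow_le_pow hk))
  have hequiv : (fun n => lineMean (m n) n k)
      ~[atTop] fun n : ℕ => (n : ℝ) * ((m n : ℝ) / n ^ 2) ^ k / k.factorial := by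
    have hchoose := ((isEquivalent_choose k).comp_tendsto hm).mul
      (.refl (u := fun n : ℕ => (n : ℝ) * (1 / (n : ℝ) ^ 2) ^ k))
    refine (EventuallyEq.isEquivalent (.of_eq ?_)).trans
      (hchoose.trans (EventuallyEq.isEquivalent (.of_eq ?_)))
    · ext n
      simp only [lineMean, Pi.mul_apply, Function.comp_apply]
      ring
    · ext n
      simp only [Pi.mul_apply, Function.comp_apply]
      ring
  exact hequiv.symm.tendsto_atTop (hlow.atTop_div_const (by positivity))

lemma tendsto_EmaxAssign_div {m : ℕ → ℕ} {k : ℕ} (hk : k ≠ 0)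
    (hlow : Tendsto (fun n : ℕ => (n : ℝ) * ((m n : ℝ) / n ^ 2) ^ k) atTop atTop)
    (hup : Tendsto (fun n : ℕ => (n : ℝ) * ((m n : ℝ) / n ^ 2) ^ (k + 1)) atTop (𝓝 0)) :
    Tendsto (fun n : ℕ => EmaxAssign (m n) n / ((k : ℝ) * n)) atTop (𝓝 1) := by
  have hd := tendsto_lineMean_atTop hk hlow
  have hlower : Tendsto (fun n => 1 - 2 * √(2 ^ k / lineMean (m n) n k)) atTop (𝓝 1) := by
    simpa using (((hd.const_div_atTop (2 ^ k)).sqrt).const_mul 2).const_sub 1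
  have hupper : Tendsto (fun n : ℕ => 1 + (n : ℝ) * ((m n : ℝ) / n ^ 2) ^ (k + 1) / k)
      atTop (𝓝 1) := by
    simpa using (hup.div_const (k : ℝ)).const_add 1
  refine tendsto_of_tendsto_of_tendsto_of_le_of_le' hlower hupper ?_ ?_
  · filter_upwards [hd.eventually_gt_atTop 0, hup.eventually_le_const zero_lt_one,
      eventually_gt_atTop 0] with n hdn hupn hn
    have : NeZero n := ⟨hn.ne'⟩
    have hn1 : (1 : ℝ) ≤ n := mod_cast hn
    have hdensity : (m n : ℝ) / n ^ 2 ≤ 1 := by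
      refine (pow_le_one_iff_of_nonneg (by positivity) k.succ_ne_zero).1 (le_trans ?_ hupn)
      exact le_mul_of_one_le_left (by positivity) hn1
    rw [le_div_iff₀ (by positivity), mul_comm, mul_assoc]
    refine le_trans ?_ (le_EmaxAssign hdn)
    gcongr
    linarith
  · filter_upwards [eventually_gt_atTop 0] with n hn
    have : NeZero n := ⟨hn.ne'⟩
    rw [div_le_iff₀ (by positivity)]
    refine (EmaxAssign_le (m n) n k).trans_eq ?_
    field_simp

variable {L : ℕ → ℝ} {a c : ℝ}

lemma isEquivalent_natCast_mul_pow (hL : L ~[atTop] fun n => c * (n : ℝ) ^ (-a)) (s : ℕ) :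
    (fun n => n * L n ^ s) ~[atTop] fun n => c ^ s * (n : ℝ) ^ (1 - a * s) := by
  refine (IsEquivalent.refl.mul (hL.pow s)).trans (EventuallyEq.isEquivalent ?_)
  filter_upwards [eventually_gt_atTop 0] with n hn
  have hn' : (0 : ℝ) < n := mod_cast hn
  simp only [Pi.mul_apply, Pi.pow_apply]
  rw [mul_pow, ← rpow_mul_natCast hn'.le, sub_eq_add_neg, rpow_add hn', rpow_one, neg_mul]
  ring

lemma tendsto_natCast_mul_pow_atTop (hL : L ~[atTop] fun n => c * (n : ℝ) ^ (-a)) (hc : 0 < c)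
    {s : ℕ} (has : a * s < 1) : Tendsto (fun n => n * L n ^ s) atTop atTop :=
  (isEquivalent_natCast_mul_pow hL s).symm.tendsto_atTop <| .const_mul_atTop (pow_pos hc s) <|
    (tendsto_rpow_atTop (sub_pos.2 has)).comp tendsto_natCast_atTop_atTop

lemma tendsto_natCast_mul_pow_zero (hL : L ~[atTop] fun n => c * (n : ℝ) ^ (-a)) {s : ℕ}
    (has : 1 < a * s) : Tendsto (fun n => n * L n ^ s) atTop (𝓝 0) := by
  refine (isEquivalent_natCast_mul_pow hL s).symm.tendsto_nhds ?_
  have hdecay := (tendsto_rpow_neg_atTop (sub_pos.2 has)).comp tendsto_natCast_atTop_atTop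
  simpa only [Function.comp_def, neg_sub, mul_zero] using hdecay.const_mul (c ^ s)

end Asymptotics

lemma existsUnique_one_div_add_one_lt_and_lt_one_div {R : Type*} [Field R] [LinearOrder R]
    [IsStrictOrderedRing R] [FloorSemiring R] {a : R} (ha0 : 0 < a) (ha1 : a < 1)
    (hreg : ∀ k : ℕ, a ≠ 1 / (k : R)) :
    ∃! k : ℕ, 0 < k ∧ 1 / ((k : R) + 1) < a ∧ a < 1 / (k : R) := by
  have hfloor : 0 < ⌊1 / a⌋₊ := Nat.floor_pos.2 ((one_le_div ha0).2 ha1.le)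
  have hfloor' : (0 : R) < ⌊1 / a⌋₊ := mod_cast hfloor
  refine ⟨⌊1 / a⌋₊, ⟨hfloor, ?_, lt_of_le_of_ne ?_ (hreg _)⟩, fun k ⟨hk, hlt, hgt⟩ => ?_⟩
  · rw [div_lt_comm₀ (by positivity) ha0]
    exact Nat.lt_floor_add_one _
  · rw [le_div_comm₀ ha0 hfloor']
    exact Nat.floor_le (by positivity)
  · rw [div_lt_comm₀ (by positivity) ha0] at hlt
    rw [lt_div_comm₀ ha0 (mod_cast hk)] at hgt
    exact ((Nat.floor_eq_iff (by positivity)).2 ⟨hgt.le, hlt⟩).symm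

/-- **Rather sparse matrices, regular case.**  If `m(n) p_n = c n^{-a} (1 + o(1))` with
`c > 0`, `a ∈ (0,1)`, and `a ∉ {1/k : k ∈ ℕ}`, then there is a unique positive integer `k`
with `1/(k+1) < a < 1/k`, and `E[max_σ ∑ i, X_{i σ(i)}] = k n (1 + o(1))`. -/
theorem expected_max_ratherSparse (m : ℕ → ℕ) (hm : ∀ n, 0 < m n) (c a : ℝ)
    (hc : 0 < c) (ha0 : 0 < a) (ha1 : a < 1)
    (hreg : ∀ k : ℕ, a ≠ 1 / (k : ℝ))
    (hmp : Tendsto (fun n : ℕ => ((m n : ℝ) / (n : ℝ) ^ 2) / (c * (n : ℝ) ^ (-a)))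
      atTop (nhds 1)) :
    (∃! k : ℕ, 0 < k ∧ 1 / ((k : ℝ) + 1) < a ∧ a < 1 / (k : ℝ)) ∧
      ∀ k : ℕ, 0 < k → 1 / ((k : ℝ) + 1) < a → a < 1 / (k : ℝ) →
        Tendsto (fun n : ℕ => EmaxAssign (m n) n / ((k : ℝ) * (n : ℝ))) atTop (nhds 1) := by
  refine ⟨existsUnique_one_div_add_one_lt_and_lt_one_div ha0 ha1 hreg, fun k hk hlt hgt => ?_⟩
  have hL := isEquivalent_of_tendsto_one hmp
  have hlow : a * k < 1 := (lt_div_iff₀ (mod_cast hk)).1 hgt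
  have hup : 1 < a * (k + 1 : ℕ) := by
    rw [Nat.cast_succ]
    exact (div_lt_iff₀ (by positivity)).1 hlt
  exact tendsto_EmaxAssign_div hk.ne' (tendsto_natCast_mul_pow_atTop hL hc hlow)
    (tendsto_natCast_mul_pow_zero hL hup)

end
end

section
/- For each n, let (X_j^{(n)})_{1≤j≤n} be negatively associated random variables, each with the binomial distribution B(m(n), p(n)), where the parameters satisfy m(n)·p(n)/log n → c for some constant c > 0 and p(n)·log n → 0 as n → ∞. Let H* = H*(c) be the unique H > 1 with H log H − (H−1) = 1/c. Then E[max_{1≤j≤n} X_j^{(n)}] = c·H*·log n·(1+o(1)); that is, E[max_{1≤j≤n} X_j^{(n)}]/(c·H*·log n) → 1 as n → ∞. -/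
open MeasureTheory Filter Real

noncomputable section

/-- The binomial distribution `B(m, p)` as a measure on `ℝ`:
it assigns mass `C(m,k) pᵏ (1-p)^{m-k}` to the point `k`, for `0 ≤ k ≤ m`. -/
def binomialMeasure (m : ℕ) (p : ℝ) : Measure ℝ :=
  ∑ k ∈ Finset.range (m + 1),
    ENNReal.ofReal ((m.choose k : ℝ) * p ^ k * (1 - p) ^ (m - k)) • Measure.dirac (k : ℝ)

/-- Random variables `X_i`, `i : ι`, are *negatively associated* if for every pair of disjoint
finite index sets `I`, `J` and every pair of bounded measurable coordinatewise nondecreasing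
functions `f`, `g`, one has `Cov(f(X_I), g(X_J)) ≤ 0`, i.e.
`E[f(X_I) g(X_J)] ≤ E[f(X_I)] E[g(X_J)]`. -/
def NegativelyAssociated {Ω : Type*} [MeasurableSpace Ω] (μ : Measure Ω)
    {ι : Type*} (X : ι → Ω → ℝ) : Prop :=
  ∀ I J : Finset ι, Disjoint I J →
    ∀ f : (I → ℝ) → ℝ, ∀ g : (J → ℝ) → ℝ,
      Measurable f → Measurable g → Monotone f → Monotone g →
      (∃ C, ∀ x, |f x| ≤ C) → (∃ C, ∀ x, |g x| ≤ C) →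
      ∫ ω, f (fun i => X i.1 ω) * g (fun j => X j.1 ω) ∂μ ≤
        (∫ ω, f (fun i => X i.1 ω) ∂μ) * ∫ ω, g (fun j => X j.1 ω) ∂μ

/-! The upper bound is a Chernoff bound: by Jensen's inequality
`exp (t * E[max X]) ≤ ∑ E[exp (t * X)] ≤ n * exp (m * p * (exp t - 1))`, and `t = log H` makes the
resulting estimate `E[max X] ≤ (1 + c * (H - 1)) / log H * log n` equal to `c * H * log n`.

For the lower bound fix `h < H`. By Stirling's formula the atom of `B(m, p)` just above
`c * h * log n` has mass `n ^ (-c * klFun h + o(1))`, where `klFun h = h * log h - (h - 1)`, and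
`c * klFun h < c * klFun H = 1`. So the expected number of `X` exceeding `c * h * log n` tends to
infinity, and since negative association makes `P(all X ≤ x)` at most `∏ P(X ≤ x)`, hence at most
`exp (-∑ P(X > x))`, the maximum exceeds that level with probability tending to `1`. -/

open ProbabilityTheory InformationTheory
open scoped Topology unitInterval

section NegativeDependence

variable {Ω ι : Type*} [MeasurableSpace Ω] {μ : Measure Ω} [IsProbabilityMeasure μ]
  {X : ι → Ω → ℝ}

theorem NegativelyAssociated.integral_prod_le_prod_integral (h : NegativelyAssociated μ X)
    {u : ι → ℝ → ℝ} (hanti : ∀ i, Antitone (u i)) (hu : ∀ i x, u i x ∈ Set.Icc (0 : ℝ) 1)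
    (s : Finset ι) :
    ∫ ω, ∏ i ∈ s, u i (X i ω) ∂μ ≤ ∏ i ∈ s, ∫ ω, u i (X i ω) ∂μ := by
  classical
  induction s using Finset.induction_on with
  | empty => simp
  | insert a s ha ih =>
    have hmeas (i : ι) : Measurable (u i) := (hanti i).measurable
    -- Negating both functions turns the antitone `u` into the monotone ones of the definition.
    have hcov := h {a} s (Finset.disjoint_singleton_left.2 ha)
      (fun x => -u a (x ⟨a, Finset.mem_singleton_self a⟩)) (fun x => -∏ i : s, u i (x i))
      (by fun_prop) (by fun_prop)
      (fun x y hxy => neg_le_neg (hanti a (hxy _)))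
      (fun x y hxy => neg_le_neg
        (Finset.prod_le_prod (fun _ _ => (hu _ _).1) fun i _ => hanti i (hxy i)))
      ⟨1, fun x => by rw [abs_neg, abs_of_nonneg (hu _ _).1]; exact (hu _ _).2⟩
      ⟨1, fun x => by
        rw [abs_neg, abs_of_nonneg (Finset.prod_nonneg fun _ _ => (hu _ _).1)]
        exact Finset.prod_le_one (fun _ _ => (hu _ _).1) fun _ _ => (hu _ _).2⟩
    simp only [neg_mul_neg, integral_neg,
      fun ω => Finset.prod_coe_sort s fun i => u i (X i ω)] at hcov
    simp only [Finset.prod_insert ha]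
    exact hcov.trans (mul_le_mul_of_nonneg_left ih (integral_nonneg fun _ => (hu _ _).1))

variable [Fintype ι]

/-- *Negative lower orthant dependence* of a finite family of random variables: the probability
that all of them stay below given thresholds is at most what it would be under independence.
This is the part of negative association that forces the maximum to be large. -/
def NegativelyLowerOrthantDependent (μ : Measure Ω) (X : ι → Ω → ℝ) : Prop :=
  ∀ x : ι → ℝ, μ.real {ω | ∀ i, X i ω ≤ x i} ≤ ∏ i, μ.real {ω | X i ω ≤ x i}

theorem NegativelyAssociated.negativelyLowerOrthantDependent (h : NegativelyAssociated μ X)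
    (hX : ∀ i, AEMeasurable (X i) μ) : NegativelyLowerOrthantDependent μ X := by
  intro x
  let u (i : ι) : ℝ → ℝ := (Set.Iic (x i)).indicator 1
  have hanti (i : ι) : Antitone (u i) := fun y z hyz => by
    simp only [u, Set.indicator_apply, Set.mem_Iic, Pi.one_apply]
    split_ifs <;> linarith
  have hu (i : ι) (y : ℝ) : u i y ∈ Set.Icc (0 : ℝ) 1 :=
    ⟨Set.indicator_nonneg (fun _ _ => zero_le_one) y,
      Set.indicator_le_self' (fun _ _ => zero_le_one) y⟩
  have hintegral {s : Set Ω} (hs : NullMeasurableSet s μ) :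
      ∫ ω, s.indicator (1 : Ω → ℝ) ω ∂μ = μ.real s := by
    rw [integral_indicator₀ hs, Pi.one_def, setIntegral_const, smul_eq_mul, mul_one]
  have hnull (i : ι) : NullMeasurableSet {ω | X i ω ≤ x i} μ :=
    (hX i).nullMeasurable measurableSet_Iic
  have hmarginal (i : ι) : ∫ ω, u i (X i ω) ∂μ = μ.real {ω | X i ω ≤ x i} :=
    hintegral (hnull i)
  have hjoint : ∫ ω, ∏ i, u i (X i ω) ∂μ = μ.real {ω | ∀ i, X i ω ≤ x i} := by
    rw [← hintegral (by simpa only [Set.ofPred_forall] using .iInter hnull)]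
    simp [u, Set.indicator_apply, Finset.prod_ite_zero]
  simpa only [hmarginal, hjoint] using h.integral_prod_le_prod_integral hanti hu Finset.univ

theorem NegativelyLowerOrthantDependent.measureReal_forall_le_le_exp
    (h : NegativelyLowerOrthantDependent μ X) (hX : ∀ i, AEMeasurable (X i) μ) (x : ι → ℝ) :
    μ.real {ω | ∀ i, X i ω ≤ x i} ≤ exp (-∑ i, μ.real {ω | x i < X i ω}) :=
  calc μ.real {ω | ∀ i, X i ω ≤ x i}
    _ ≤ ∏ i, μ.real {ω | X i ω ≤ x i} := h x
    _ ≤ ∏ i, exp (-μ.real {ω | x i < X i ω}) := by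
      refine Finset.prod_le_prod (fun _ _ => measureReal_nonneg) fun i _ => ?_
      have hcompl : μ.real {ω | X i ω ≤ x i} = 1 - μ.real {ω | x i < X i ω} := by
        rw [← probReal_compl_eq_one_sub₀ (nullMeasurableSet_lt aemeasurable_const (hX i))]
        simp only [Set.compl_ofPred, not_lt]
      exact hcompl.trans_le (one_sub_le_exp_neg _)
    _ = exp (-∑ i, μ.real {ω | x i < X i ω}) := by rw [← exp_sum, Finset.sum_neg_distrib]

end NegativeDependence

section Maximum

variable {Ω ι : Type*} [MeasurableSpace Ω] {μ : Measure Ω} [Nonempty ι]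
  {X : ι → Ω → ℝ}

theorem integrable_ciSup [Finite ι] (hX : ∀ i, Integrable (X i) μ) :
    Integrable (fun ω => ⨆ i, X i ω) μ := by
  have := Fintype.ofFinite ι
  refine (integrable_finsetSum Finset.univ fun i _ => (hX i).abs).mono'
    (AEMeasurable.iSup fun i => (hX i).aemeasurable).aestronglyMeasurable
    (ae_of_all _ fun ω => ?_)
  obtain ⟨i, hi⟩ := exists_eq_ciSup_of_finite (f := fun i => X i ω)
  rw [← hi, norm_eq_abs]
  exact Finset.single_le_sum (f := fun i => |X i ω|) (fun _ _ => abs_nonneg _) (Finset.mem_univ i)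

variable [Fintype ι] [IsProbabilityMeasure μ]

theorem exp_mul_integral_ciSup_le_sum_mgf {t : ℝ} (hX : ∀ i, Integrable (X i) μ)
    (hexp : ∀ i, Integrable (fun ω => exp (t * X i ω)) μ) :
    exp (t * ∫ ω, ⨆ i, X i ω ∂μ) ≤ ∑ i, mgf (X i) μ t := by
  have hle (ω : Ω) : exp (t * ⨆ i, X i ω) ≤ ∑ i, exp (t * X i ω) := by
    obtain ⟨i, hi⟩ := exists_eq_ciSup_of_finite (f := fun i => X i ω)
    rw [← hi]
    exact Finset.single_le_sum (f := fun i => exp (t * X i ω)) (fun _ _ => (exp_pos _).le)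
      (Finset.mem_univ i)
  have hsum := integrable_finsetSum Finset.univ fun i _ => hexp i
  have hsup := (integrable_ciSup hX).const_mul t
  have hexp_sup : Integrable (fun ω => exp (t * ⨆ i, X i ω)) μ :=
    hsum.mono' (measurable_exp.comp_aemeasurable hsup.aemeasurable).aestronglyMeasurable
      (ae_of_all _ fun ω => by simpa using hle ω)
  calc exp (t * ∫ ω, ⨆ i, X i ω ∂μ)
    _ = exp (∫ ω, t * ⨆ i, X i ω ∂μ) := by rw [integral_const_mul]
    _ ≤ ∫ ω, exp (t * ⨆ i, X i ω) ∂μ :=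
      convexOn_exp.map_integral_le continuousOn_exp isClosed_univ (by simp) hsup hexp_sup
    _ ≤ ∫ ω, ∑ i, exp (t * X i ω) ∂μ := integral_mono hexp_sup hsum hle
    _ = ∑ i, mgf (X i) μ t := integral_finsetSum _ fun i _ => hexp i

theorem NegativelyLowerOrthantDependent.mul_one_sub_exp_le_integral_ciSup
    (h : NegativelyLowerOrthantDependent μ X) (hX : ∀ i, Integrable (X i) μ)
    (hX0 : ∀ i, 0 ≤ᵐ[μ] X i) {x : ℝ} (hx : 0 ≤ x) :
    x * (1 - exp (-∑ i, μ.real {ω | x < X i ω})) ≤ ∫ ω, ⨆ i, X i ω ∂μ := by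
  have hae (i : ι) : AEMeasurable (X i) μ := (hX i).aemeasurable
  have hnonneg : 0 ≤ᵐ[μ] fun ω => ⨆ i, X i ω := by
    filter_upwards [ae_all_iff.2 hX0] with ω hω using iSup_nonneg hω
  have hexceed : 1 - μ.real {ω | ∀ i, X i ω ≤ x} ≤ μ.real {ω | x ≤ ⨆ i, X i ω} := by
    have hnull : NullMeasurableSet {ω | ∀ i, X i ω ≤ x} μ := by
      simp only [Set.ofPred_forall]
      exact .iInter fun i => (hae i).nullMeasurable measurableSet_Iic
    rw [← probReal_compl_eq_one_sub₀ hnull]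
    refine measureReal_mono fun ω hω => ?_
    obtain ⟨i, hi⟩ : ∃ i, x < X i ω := by simpa using hω
    exact hi.le.trans (le_ciSup (f := fun i => X i ω) (Set.finite_range _).bddAbove i)
  calc x * (1 - exp (-∑ i, μ.real {ω | x < X i ω}))
    _ ≤ x * (1 - μ.real {ω | ∀ i, X i ω ≤ x}) := by
      gcongr
      exact h.measureReal_forall_le_le_exp hae fun _ => x
    _ ≤ x * μ.real {ω | x ≤ ⨆ i, X i ω} := by gcongr
    _ ≤ ∫ ω, ⨆ i, X i ω ∂μ := mul_meas_ge_le_integral_of_nonneg hnonneg (integrable_ciSup hX) x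

end Maximum

section Binomial

theorem binomialMeasure_eq_map_cast_binomial (m : ℕ) (p : I) :
    binomialMeasure m p = Bin(ℝ, m, p) := by
  rw [map_cast_binomial_eq_sum_dirac, binomialMeasure, Nat.range_succ_eq_Iic]

variable {Ω : Type*} [MeasurableSpace Ω] {μ : Measure Ω} {X : Ω → ℝ} {m : ℕ} {p : I}

theorem integrable_comp_of_hasLaw_binomial (hX : HasLaw X Bin(ℝ, m, p) μ) (f : ℝ → ℝ) :
    Integrable (fun ω => f (X ω)) μ := by
  have hf : Integrable f (μ.map X) := hX.map_eq ▸ integrable_map_cast_binomial f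
  exact hf.comp_aemeasurable hX.aemeasurable

theorem ae_nonneg_of_hasLaw_binomial (hX : HasLaw X Bin(ℝ, m, p) μ) : 0 ≤ᵐ[μ] X := by
  refine (hX.ae_iff (p := (0 ≤ ·)) (measurableSet_setOfPred.1 measurableSet_Ici)).2 ?_
  exact (ae_map_iff (by fun_prop) measurableSet_Ici).2 (ae_of_all _ Nat.cast_nonneg)

theorem mgf_of_hasLaw_binomial (hX : HasLaw X Bin(ℝ, m, p) μ) (t : ℝ) :
    mgf X μ t = (p * exp t + (1 - p)) ^ m := by
  rw [← mgf_id_map hX.aemeasurable, hX.map_eq, mgf, integral_map_cast_binomial, add_pow,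
    Nat.range_succ_eq_Iic]
  refine Finset.sum_congr rfl fun k _ => ?_
  rw [smul_eq_mul, id, mul_comm t, exp_nat_mul, mul_pow]
  ring

theorem mgf_le_exp_of_hasLaw_binomial (hX : HasLaw X Bin(ℝ, m, p) μ) (t : ℝ) :
    mgf X μ t ≤ exp (m * p * (exp t - 1)) := by
  rw [mgf_of_hasLaw_binomial hX, mul_assoc, exp_nat_mul]
  have h0 : 0 ≤ (p : ℝ) * exp t + (1 - p) :=
    add_nonneg (mul_nonneg p.2.1 (exp_pos t).le) (sub_nonneg.2 p.2.2)
  refine pow_le_pow_left₀ h0 ?_ m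
  linarith [add_one_le_exp ((p : ℝ) * (exp t - 1))]

theorem mul_integral_ciSup_le_of_hasLaw_binomial {ι : Type*} [Fintype ι] [Nonempty ι]
    [IsProbabilityMeasure μ] {X : ι → Ω → ℝ} (hX : ∀ i, HasLaw (X i) Bin(ℝ, m, p) μ) (t : ℝ) :
    t * ∫ ω, ⨆ i, X i ω ∂μ ≤ log (Fintype.card ι) + m * p * (exp t - 1) := by
  rw [← exp_le_exp, exp_add, exp_log (by exact_mod_cast Fintype.card_pos)]
  calc exp (t * ∫ ω, ⨆ i, X i ω ∂μ)
    _ ≤ ∑ i, mgf (X i) μ t :=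
      exp_mul_integral_ciSup_le_sum_mgf (fun i => integrable_comp_of_hasLaw_binomial (hX i) id)
        fun i => integrable_comp_of_hasLaw_binomial (hX i) fun x => exp (t * x)
    _ ≤ ∑ _i : ι, exp (m * p * (exp t - 1)) :=
      Finset.sum_le_sum fun i _ => mgf_le_exp_of_hasLaw_binomial (hX i) t
    _ = Fintype.card ι * exp (m * p * (exp t - 1)) := by simp

theorem mul_one_sub_exp_le_integral_ciSup_of_hasLaw_binomial {ι : Type*} [Fintype ι] [Nonempty ι]
    [IsProbabilityMeasure μ] {X : ι → Ω → ℝ} (hX : ∀ i, HasLaw (X i) Bin(ℝ, m, p) μ)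
    (hdep : NegativelyLowerOrthantDependent μ X) {x : ℝ} (hx : 0 ≤ x) :
    x * (1 - exp (-(Fintype.card ι * Bin(ℝ, m, p).real (Set.Ioi x)))) ≤
      ∫ ω, ⨆ i, X i ω ∂μ := by
  have htail (i : ι) : μ.real {ω | x < X i ω} = Bin(ℝ, m, p).real (Set.Ioi x) :=
    (hX i).measureReal_eq measurableSet_Ioi
  simpa [htail] using hdep.mul_one_sub_exp_le_integral_ciSup
    (fun i => integrable_comp_of_hasLaw_binomial (hX i) id)
    (fun i => ae_nonneg_of_hasLaw_binomial (hX i)) hx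

end Binomial

section LowerTail

theorem log_factorial_le {n : ℕ} (hn : n ≠ 0) :
    log n.factorial ≤ n * log n - n + 1 + log n / 2 := by
  obtain ⟨k, rfl⟩ := Nat.exists_eq_add_one_of_ne_zero hn
  have hk : ((k + 1 : ℕ) : ℝ) ≠ 0 := Nat.cast_ne_zero.2 hn
  have hone : log (Stirling.stirlingSeq 1) = 1 - log 2 / 2 := by
    rw [Stirling.stirlingSeq_one, log_div (exp_ne_zero 1) (by positivity), log_exp,
      log_sqrt zero_le_two]
  have hanti : log (Stirling.stirlingSeq (k + 1)) ≤ log (Stirling.stirlingSeq 1) :=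
    Stirling.log_stirlingSeq'_antitone k.zero_le
  rw [hone, Stirling.log_stirlingSeq_formula, log_div hk (exp_ne_zero 1), log_mul two_ne_zero hk,
    log_exp] at hanti
  linarith

theorem le_log_choose_mul_pow {m k : ℕ} (hk : k ≠ 0) (hkm : k < m) {p : ℝ}
    (hp : p ∈ Set.Ioo (0 : ℝ) 1) :
    k * log ((m - k) * p / k) + k - 1 - log k / 2 - m * p / (1 - p) ≤
      log (m.choose k * p ^ k * (1 - p) ^ (m - k)) := by
  obtain ⟨hp0, hp1⟩ := hp
  have hq0 : 0 < 1 - p := sub_pos.2 hp1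
  have hk0 : (0 : ℝ) < k := by positivity
  have hmk : (0 : ℝ) < m - k := sub_pos.2 (by exact_mod_cast hkm)
  have hch : (0 : ℝ) < m.choose k := by exact_mod_cast Nat.choose_pos hkm.le
  have hchoose : k * log (m - k) ≤ log k.factorial + log (m.choose k) := by
    rw [← log_mul (by positivity) hch.ne', ← log_pow]
    refine log_le_log (by positivity) ?_
    calc ((m : ℝ) - k) ^ k
      _ ≤ ((m + 1 - k : ℕ) : ℝ) ^ k := by
        gcongr
        rw [Nat.cast_sub (by lia)]
        push_cast
        linarith
      _ ≤ (m.descFactorial k : ℝ) := by exact_mod_cast Nat.pow_sub_le_descFactorial m k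
      _ = k.factorial * m.choose k := by
        rw [Nat.descFactorial_eq_factorial_mul_choose, Nat.cast_mul]
  have hfail : -(m * p / (1 - p)) ≤ (m - k : ℕ) * log (1 - p) := by
    have hlog : -(p / (1 - p)) ≤ log (1 - p) := by
      refine le_trans (le_of_eq ?_) (one_sub_inv_le_log_of_pos hq0)
      field_simp
      ring
    calc -(m * p / (1 - p))
      _ ≤ (m - k : ℕ) * -(p / (1 - p)) := by
        rw [mul_neg, mul_div_assoc]
        gcongr
        exact Nat.sub_le m k
      _ ≤ (m - k : ℕ) * log (1 - p) := by gcongr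
  rw [log_mul (by positivity) (by positivity), log_mul hch.ne' (by positivity), log_pow, log_pow,
    log_div (by positivity) hk0.ne', log_mul hmk.ne' hp0.ne']
  linarith [log_factorial_le hk]

variable {α : Type*} {l : Filter α} {L : α → ℝ} {c : ℝ}

theorem tendsto_log_binomial_lower_bound {m k p : α → ℝ} {κ : ℝ} (hc : 0 < c) (hκ : 0 < κ)
    (hL : Tendsto L l atTop) (hk : Tendsto (fun a => k a / L a) l (𝓝 κ))
    (hmp : Tendsto (fun a => m a * p a / L a) l (𝓝 c)) (hp : Tendsto p l (𝓝 0)) :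
    Tendsto (fun a => (k a * log ((m a - k a) * p a / k a) + k a - 1 - log (k a) / 2
      - m a * p a / (1 - p a)) / L a) l (𝓝 (κ * log (c / κ) + κ - c)) := by
  have hLinv : Tendsto (fun a => (L a)⁻¹) l (𝓝 0) := hL.inv_tendsto_atTop
  have hk_top : Tendsto k l atTop := by
    refine (hk.pos_mul_atTop hκ hL).congr' ?_
    filter_upwards [hL.eventually_ne_atTop 0] with a ha using div_mul_cancel₀ _ ha
  have hratio : Tendsto (fun a => (m a - k a) * p a / k a) l (𝓝 (c / κ)) := by
    have h := (hmp.sub (hk.mul hp)).div hk hκ.ne'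
    rw [mul_zero, sub_zero] at h
    refine h.congr' ?_
    filter_upwards [hL.eventually_ne_atTop 0, hk_top.eventually_ne_atTop 0] with a hLa hka
    simp only [Pi.div_apply]
    field_simp
  have hlogk : Tendsto (fun a => log (k a) / L a) l (𝓝 0) := by
    have h := (isLittleO_log_id_atTop.tendsto_div_nhds_zero.comp hk_top).mul hk
    rw [zero_mul] at h
    refine h.congr' ?_
    filter_upwards [hk_top.eventually_ne_atTop 0] with a hka
    simp only [Function.comp_apply, id]
    field_simp
  have hfail : Tendsto (fun a => m a * p a / L a / (1 - p a)) l (𝓝 c) := by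
    simpa [Pi.div_def] using hmp.div (hp.const_sub 1) (by norm_num)
  have h := ((((hk.mul (hratio.log (by positivity))).add hk).sub hLinv).sub
    (hlogk.div_const 2)).sub hfail
  rw [sub_zero, zero_div, sub_zero] at h
  refine h.congr fun a => ?_
  ring

theorem le_real_Ioi_binomial {m k : ℕ} {p : I} {x : ℝ} (hxk : x < k) :
    m.choose k * (p : ℝ) ^ k * (1 - p) ^ (m - k) ≤ Bin(ℝ, m, p).real (Set.Ioi x) := by
  rw [← map_cast_binomial_real_singleton (R := ℝ)]
  exact measureReal_mono (Set.singleton_subset_iff.2 hxk)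

theorem eventually_exp_neg_mul_le_real_Ioi_binomial {m : α → ℕ} {p : α → I} {h δ : ℝ}
    (hc : 0 < c) (hh : 0 < h) (hδ : c * klFun h < δ) (hL : Tendsto L l atTop)
    (hmp : Tendsto (fun a => m a * (p a : ℝ) / L a) l (𝓝 c))
    (hp : Tendsto (fun a => (p a : ℝ)) l (𝓝 0)) :
    ∀ᶠ a in l, exp (-(δ * L a)) ≤ Bin(ℝ, m a, p a).real (Set.Ioi (c * h * L a)) := by
  have hκ : 0 < c * h := mul_pos hc hh
  -- A single atom suffices: the first one above the threshold already decays at rate `c * klFun h`.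
  let k (a : α) : ℕ := ⌊c * h * L a⌋₊ + 1
  have hk : Tendsto (fun a => (k a : ℝ) / L a) l (𝓝 (c * h)) := by
    have hfloor := (tendsto_nat_floor_mul_div_atTop hκ.le).comp hL
    simpa [k, add_div] using hfloor.add hL.inv_tendsto_atTop
  have hkm : ∀ᶠ a in l, (k a : ℝ) * p a / L a < m a * p a / L a := by
    have hkp : Tendsto (fun a => (k a : ℝ) * p a / L a) l (𝓝 0) := by
      simpa [div_mul_eq_mul_div] using hk.mul hp
    exact hkp.eventually_lt hmp hc
  have hbound := tendsto_log_binomial_lower_bound hc hκ hL hk hmp hp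
  have hrate : -δ < c * h * log (c / (c * h)) + c * h - c := by
    rw [div_mul_cancel_left₀ hc.ne', log_inv]
    rw [klFun_apply] at hδ
    linarith
  filter_upwards [hbound.eventually_const_lt hrate, hkm, hL.eventually_gt_atTop 0,
    hp.eventually_lt_const one_pos] with a hbound hkm hLa hp1
  have hkm' := (div_lt_div_iff_of_pos_right hLa).1 hkm
  have hkm_nat : k a < m a := by exact_mod_cast lt_of_mul_lt_mul_right hkm' (p a).2.1
  have hp0 : 0 < (p a : ℝ) := (p a).2.1.lt_of_ne fun h0 => by simp [← h0] at hkm'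
  have hlog := le_log_choose_mul_pow (Nat.succ_ne_zero _) hkm_nat ⟨hp0, hp1⟩
  have hpos : 0 < (m a).choose (k a) * (p a : ℝ) ^ k a * (1 - p a) ^ (m a - k a) := by
    have : 0 < 1 - (p a : ℝ) := sub_pos.2 hp1
    have : 0 < (m a).choose (k a) := Nat.choose_pos hkm_nat.le
    positivity
  calc exp (-(δ * L a))
    _ ≤ (m a).choose (k a) * (p a : ℝ) ^ k a * (1 - p a) ^ (m a - k a) := by
      rw [← le_log_iff_exp_le hpos, ← neg_mul]
      exact ((lt_div_iff₀ hLa).1 hbound).le.trans hlog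
    _ ≤ _ := le_real_Ioi_binomial (by simpa [k] using Nat.lt_floor_add_one (c * h * L a))

end LowerTail

section Critical

theorem strictMonoOn_klFun : StrictMonoOn klFun (Set.Ici 1) := by
  refine strictMonoOn_of_deriv_pos (convex_Ici 1) continuous_klFun.continuousOn fun x hx => ?_
  rw [interior_Ici] at hx
  rw [deriv_klFun]
  exact log_pos hx

variable {α : Type*} {l : Filter α} {ι : α → Type*} [∀ a, Fintype (ι a)] {Ω : α → Type*}
  [∀ a, MeasurableSpace (Ω a)] {μ : ∀ a, Measure (Ω a)} [∀ a, IsProbabilityMeasure (μ a)]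
  {X : ∀ a, ι a → Ω a → ℝ} {m : α → ℕ} {p : α → I} {c H : ℝ}

theorem tendsto_log_card (hcard : Tendsto (fun a => Fintype.card (ι a)) l atTop) :
    Tendsto (fun a => log (Fintype.card (ι a))) l atTop :=
  tendsto_log_atTop.comp (tendsto_natCast_atTop_atTop.comp hcard)

theorem eventually_integral_ciSup_div_lt (hlaw : ∀ a i, HasLaw (X a i) Bin(ℝ, m a, p a) (μ a))
    (hcard : Tendsto (fun a => Fintype.card (ι a)) l atTop) (hc : 0 < c)
    (hmp : Tendsto (fun a => m a * (p a : ℝ) / log (Fintype.card (ι a))) l (𝓝 c))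
    (hH : 1 < H) (hrate : c * klFun H = 1) {b : ℝ} (hb : 1 < b) :
    ∀ᶠ a in l, (∫ ω, ⨆ i, X a i ω ∂μ a) / (c * H * log (Fintype.card (ι a))) < b := by
  have hH0 : 0 < H := one_pos.trans hH
  have hlogH : 0 < log H := log_pos hH
  have hlim := ((hmp.mul_const (H - 1)).const_add 1).div_const (log H * (c * H))
  have hlim_eq : (1 + c * (H - 1)) / (log H * (c * H)) = 1 := by
    rw [div_eq_one_iff_eq (by positivity)]
    rw [klFun_apply] at hrate
    linarith
  rw [hlim_eq] at hlim
  filter_upwards [hlim.eventually_lt_const hb, (tendsto_log_card hcard).eventually_gt_atTop 0,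
    hcard.eventually_gt_atTop 0] with a hlt hL hpos
  have : Nonempty (ι a) := Fintype.card_pos_iff.1 hpos
  -- The Chernoff parameter `t = log H` optimises the exponential bound.
  have hupper := mul_integral_ciSup_le_of_hasLaw_binomial (hlaw a) (log H)
  rw [exp_log hH0] at hupper
  refine lt_of_le_of_lt ?_ hlt
  calc (∫ ω, ⨆ i, X a i ω ∂μ a) / (c * H * log (Fintype.card (ι a)))
    _ = log H * (∫ ω, ⨆ i, X a i ω ∂μ a) / log (Fintype.card (ι a)) / (log H * (c * H)) := by
      field_simp
    _ ≤ (log (Fintype.card (ι a)) + m a * p a * (H - 1)) / log (Fintype.card (ι a)) /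
        (log H * (c * H)) := by gcongr
    _ = (1 + m a * p a / log (Fintype.card (ι a)) * (H - 1)) / (log H * (c * H)) := by
      field_simp

theorem tendsto_card_mul_real_Ioi_binomial {h : ℝ} (hc : 0 < c) (hh : 0 < h)
    (hrate : c * klFun h < 1) (hcard : Tendsto (fun a => Fintype.card (ι a)) l atTop)
    (hmp : Tendsto (fun a => m a * (p a : ℝ) / log (Fintype.card (ι a))) l (𝓝 c))
    (hp : Tendsto (fun a => (p a : ℝ)) l (𝓝 0)) :
    Tendsto (fun a => Fintype.card (ι a) *
      Bin(ℝ, m a, p a).real (Set.Ioi (c * h * log (Fintype.card (ι a))))) l atTop := by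
  have hL := tendsto_log_card hcard
  obtain ⟨δ, hδ, hδ1⟩ := exists_between hrate
  refine tendsto_atTop_mono' l ?_
    (tendsto_exp_atTop.comp (hL.const_mul_atTop (sub_pos.2 hδ1)))
  filter_upwards [eventually_exp_neg_mul_le_real_Ioi_binomial hc hh hδ hL hmp hp,
    hcard.eventually_gt_atTop 0] with a htail hpos
  calc exp ((1 - δ) * log (Fintype.card (ι a)))
    _ = Fintype.card (ι a) * exp (-(δ * log (Fintype.card (ι a)))) := by
      rw [one_sub_mul, sub_eq_add_neg, exp_add, exp_log (by exact_mod_cast hpos)]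
    _ ≤ _ := by gcongr

theorem eventually_lt_integral_ciSup_div (hlaw : ∀ a i, HasLaw (X a i) Bin(ℝ, m a, p a) (μ a))
    (hdep : ∀ a, NegativelyLowerOrthantDependent (μ a) (X a))
    (hcard : Tendsto (fun a => Fintype.card (ι a)) l atTop) (hc : 0 < c)
    (hmp : Tendsto (fun a => m a * (p a : ℝ) / log (Fintype.card (ι a))) l (𝓝 c))
    (hp : Tendsto (fun a => (p a : ℝ)) l (𝓝 0))
    (hH : 1 < H) (hrate : c * klFun H = 1) {b : ℝ} (hb : b < 1) :
    ∀ᶠ a in l, b < (∫ ω, ⨆ i, X a i ω ∂μ a) / (c * H * log (Fintype.card (ι a))) := by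
  have hH0 : 0 < H := one_pos.trans hH
  obtain ⟨h, hbh, hhH⟩ : ∃ h, max 1 (b * H) < h ∧ h < H :=
    exists_between (max_lt hH (mul_lt_of_lt_one_left hH0 hb))
  obtain ⟨hh, hbh⟩ := max_lt_iff.1 hbh
  have hh0 : 0 < h := one_pos.trans hh
  have hrate_lt : c * klFun h < 1 :=
    (mul_lt_mul_of_pos_left (strictMonoOn_klFun hh.le hH.le hhH) hc).trans_eq hrate
  have htail := tendsto_card_mul_real_Ioi_binomial hc hh0 hrate_lt hcard hmp hp
  have hlim : Tendsto (fun a => h / H * (1 - exp (-(Fintype.card (ι a) *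
      Bin(ℝ, m a, p a).real (Set.Ioi (c * h * log (Fintype.card (ι a)))))))) l (𝓝 (h / H)) := by
    simpa using ((tendsto_exp_neg_atTop_nhds_zero.comp htail).const_sub 1).const_mul (h / H)
  filter_upwards [hlim.eventually_const_lt ((lt_div_iff₀ hH0).2 hbh),
    (tendsto_log_card hcard).eventually_gt_atTop 0, hcard.eventually_gt_atTop 0] with a hlt hL hpos
  have : Nonempty (ι a) := Fintype.card_pos_iff.1 hpos
  refine hlt.trans_le ?_
  have hlower := mul_one_sub_exp_le_integral_ciSup_of_hasLaw_binomial (hlaw a) (hdep a)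
    (x := c * h * log (Fintype.card (ι a))) (by positivity)
  rw [le_div_iff₀ (by positivity)]
  refine le_trans (le_of_eq ?_) hlower
  field_simp

end Critical

theorem expected_max_NA_binomial_critical_general {α : Type*} {l : Filter α} {ι : α → Type*}
    [∀ a, Fintype (ι a)] {Ω : α → Type*} [∀ a, MeasurableSpace (Ω a)] {μ : ∀ a, Measure (Ω a)}
    [∀ a, IsProbabilityMeasure (μ a)] {X : ∀ a, ι a → Ω a → ℝ} {m : α → ℕ} {p : α → I} {c H : ℝ}
    (hlaw : ∀ a i, HasLaw (X a i) Bin(ℝ, m a, p a) (μ a))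
    (hdep : ∀ a, NegativelyLowerOrthantDependent (μ a) (X a))
    (hcard : Tendsto (fun a => Fintype.card (ι a)) l atTop) (hc : 0 < c)
    (hmp : Tendsto (fun a => m a * (p a : ℝ) / log (Fintype.card (ι a))) l (𝓝 c))
    (hp : Tendsto (fun a => (p a : ℝ)) l (𝓝 0))
    (hH : 1 < H) (hHeq : H * log H - (H - 1) = 1 / c) :
    Tendsto (fun a => (∫ ω, ⨆ i, X a i ω ∂μ a) / (c * H * log (Fintype.card (ι a)))) l (𝓝 1) := by
  have hrate : c * klFun H = 1 := by
    rw [← mul_one_div_cancel hc.ne', ← hHeq, klFun_apply]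
    ring
  exact tendsto_order.2
    ⟨fun _ hb => eventually_lt_integral_ciSup_div hlaw hdep hcard hc hmp hp hH hrate hb,
      fun _ hb => eventually_integral_ciSup_div_lt hlaw hcard hc hmp hH hrate hb⟩

/-- **Critical zone for negatively associated binomial maxima.**  If for each `n` the
variables `X^{(n)}_1, …, X^{(n)}_n` are negatively associated, each `B(m(n), p(n))`,
with `m(n) p(n) / log n → c > 0` and `p(n) log n → 0`, and `H* > 1` is the unique solution
of `H log H - (H-1) = 1/c`, then `E[max_j X^{(n)}_j] = c H* log n (1 + o(1))`. -/
theorem expected_max_NA_binomial_critical (m : ℕ → ℕ) (p : ℕ → ℝ)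
    (hp : ∀ n, p n ∈ Set.Ioo (0 : ℝ) 1)
    (Ω : ℕ → Type*) [mΩ : ∀ n, MeasurableSpace (Ω n)] (μ : ∀ n, Measure (Ω n))
    [hμ : ∀ n, IsProbabilityMeasure (μ n)]
    (X : ∀ n, Fin n → Ω n → ℝ)
    (hmeas : ∀ n (j : Fin n), Measurable (X n j))
    (hNA : ∀ n, NegativelyAssociated (μ n) (X n))
    (hlaw : ∀ n (j : Fin n), Measure.map (X n j) (μ n) = binomialMeasure (m n) (p n))
    (c : ℝ) (hc : 0 < c)
    (hmp : Tendsto (fun n : ℕ => (m n : ℝ) * p n / Real.log n) atTop (nhds c))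
    (hplog : Tendsto (fun n : ℕ => p n * Real.log n) atTop (nhds 0))
    (Hstar : ℝ) (hHgt : 1 < Hstar)
    (hHeq : Hstar * Real.log Hstar - (Hstar - 1) = 1 / c)
    (hHuniq : ∀ H : ℝ, 1 < H → H * Real.log H - (H - 1) = 1 / c → H = Hstar) :
    Tendsto (fun n : ℕ => (∫ ω, (⨆ j : Fin n, X n j ω) ∂(μ n)) / (c * Hstar * Real.log n))
      atTop (nhds 1) := by
  let q (n : ℕ) : I := ⟨p n, Set.Ioo_subset_Icc_self (hp n)⟩
  have hlaw' (n : ℕ) (j : Fin n) : HasLaw (X n j) Bin(ℝ, m n, q n) (μ n) :=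
    ⟨(hmeas n j).aemeasurable, (hlaw n j).trans (binomialMeasure_eq_map_cast_binomial (m n) (q n))⟩
  have hdep (n : ℕ) := (hNA n).negativelyLowerOrthantDependent fun j => (hmeas n j).aemeasurable
  have hlog : Tendsto (fun n : ℕ => log n) atTop atTop :=
    tendsto_log_atTop.comp tendsto_natCast_atTop_atTop
  have hp0 : Tendsto p atTop (𝓝 0) := by
    refine (hplog.div_atTop hlog).congr' ?_
    filter_upwards [hlog.eventually_ne_atTop 0] with n hn using mul_div_cancel_right₀ _ hn
  simpa using expected_max_NA_binomial_critical_general (p := q) hlaw' hdep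
    (tendsto_id.congr fun n => (Fintype.card_fin n).symm) hc (by simpa using hmp) hp0 hHgt hHeq

end
end
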